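/- (Lemma 4.2: failure of diagonalizability of the evolution symbol.) Let G be an area metric on ℝ⁴ such that the endomorphism K = ω̂_G ∘ Ĝ⁻¹ of Λ²((ℝ⁴)*) admits a real Jordan chain of length two: there exist λ ∈ ℝ and Ω₁, Ω₂ ∈ Λ²((ℝ⁴)*) with Ω₁ ≠ 0, KΩ₁ = λΩ₁ and KΩ₂ = Ω₁ + λΩ₂. Let (f₀,f₁,f₂,f₃) be any basis of ℝ⁴ with dual basis (f⁰,f¹,f²,f³) such that, with all components taken in this basis, 𝒢(f⁰,f⁰,f⁰,f⁰) ≠ 0 and the 3×3 matrix ((G⁻¹)^{0μ0ν})_{μ,ν∈{1,2,3}} is invertible (so that A⁰ is invertible). Then there exists a nonzero covector k in the span of f¹, f², f³ such that the 6×6 matrix C(k) = −(A⁰)⁻¹(A¹k₁ + A²k₂ + A³k₃) is not diagonalizable over ℂ: the algebraic multiplicity of its eigenvalue 0 strictly exceeds the geometric multiplicity. -/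

import Mathlib

noncomputable section

/-- First members of the ordered Petrov index pairs `[01],[02],[03],[12],[31],[23]`. -/
def pFst : Fin 6 → Fin 4 := ![0, 0, 0, 1, 3, 2]

/-- Second members of the ordered Petrov index pairs `[01],[02],[03],[12],[31],[23]`. -/
def pSnd : Fin 6 → Fin 4 := ![1, 2, 3, 2, 1, 3]

/-- The Petrov matrix of a rank-4 covariant tensor on `ℝ⁴`: the symmetric `6 × 6` matrix
of components `G_{abcd}` indexed by the ordered pairs `[01],[02],[03],[12],[31],[23]`. -/
def petrov (G : Fin 4 → Fin 4 → Fin 4 → Fin 4 → ℝ) : Matrix (Fin 6) (Fin 6) ℝ :=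
  Matrix.of fun A B => G (pFst A) (pSnd A) (pFst B) (pSnd B)

/-- The totally antisymmetric Levi-Civita symbol on four indices with `ε₀₁₂₃ = 1`. -/
def eps (a b c d : Fin 4) : ℝ :=
  (Matrix.of fun i j => if (![a, b, c, d] : Fin 4 → Fin 4) i = j then (1 : ℝ) else 0).det

/-- The Petrov index associated to a pair of distinct indices (arbitrary on the diagonal). -/
def bIdx : Fin 4 → Fin 4 → Fin 6 :=
  ![![0, 0, 1, 2], ![0, 0, 3, 4], ![1, 3, 0, 5], ![2, 4, 5, 0]]

/-- The sign relating the tensor component `T_{ab}` to the Petrov component at `bIdx a b`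
(`0` on the diagonal); the pair `[31]` is stored in the order `(3,1)`. -/
def bSgn : Fin 4 → Fin 4 → ℝ :=
  ![![0, 1, 1, 1], ![-1, 0, 1, -1], ![-1, -1, 0, 1], ![-1, 1, -1, 0]]

/-- The rank-4 tensor with the area metric symmetries reconstructed from a
(symmetric) Petrov matrix. -/
def fromPetrov (M : Matrix (Fin 6) (Fin 6) ℝ) : Fin 4 → Fin 4 → Fin 4 → Fin 4 → ℝ :=
  fun a b c d => bSgn a b * bSgn c d * M (bIdx a b) (bIdx c d)

/-- The components `(G⁻¹)^{abcd}` of the inverse area metric, characterized by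
`Petrov(G⁻¹) = Petrov(G)⁻¹`. -/
def ginv (G : Fin 4 → Fin 4 → Fin 4 → Fin 4 → ℝ) : Fin 4 → Fin 4 → Fin 4 → Fin 4 → ℝ :=
  fromPetrov (petrov G)⁻¹

/-- The area metric volume form `(ω_G)_{abcd} = |det Petrov(G)|^{1/6} ε_{abcd}`. -/
def vol (G : Fin 4 → Fin 4 → Fin 4 → Fin 4 → ℝ) (a b c d : Fin 4) : ℝ :=
  |(petrov G).det| ^ ((1 : ℝ) / 6) * eps a b c d

/-- The inverse volume form `(ω_G⁻¹)^{abcd} = |det Petrov(G)|^{-1/6} ε^{abcd}`. -/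
def volInv (G : Fin 4 → Fin 4 → Fin 4 → Fin 4 → ℝ) (a b c d : Fin 4) : ℝ :=
  |(petrov G).det| ^ (-(1 : ℝ) / 6) * eps a b c d

/-- The Fresnel polynomial
`𝒢(k,k,k,k) = -(1/24)(ω_G)_{mnpq}(ω_G)_{rstu}(G⁻¹)^{mnra}(G⁻¹)^{bpsc}(G⁻¹)^{dqtu} k_a k_b k_c k_d`
(all repeated indices summed over `0,…,3`; the symmetrization over `a,b,c,d` in the Fresnel
tensor is immaterial after contraction with `k_a k_b k_c k_d`). -/
def fresnelPoly (G : Fin 4 → Fin 4 → Fin 4 → Fin 4 → ℝ) (k : Fin 4 → ℝ) : ℝ :=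
  -(1 / 24) * ∑ m : Fin 4, ∑ n : Fin 4, ∑ p : Fin 4, ∑ q : Fin 4, ∑ r : Fin 4, ∑ s : Fin 4,
      ∑ t : Fin 4, ∑ u : Fin 4, ∑ a : Fin 4, ∑ b : Fin 4, ∑ c : Fin 4, ∑ d : Fin 4,
    vol G m n p q * vol G r s t u * ginv G m n r a * ginv G b p s c * ginv G d q t u *
      k a * k b * k c * k d

/-- Assemble a `6 × 6` matrix from four `3 × 3` blocks. -/
def blk (P Q R S : Matrix (Fin 3) (Fin 3) ℝ) : Matrix (Fin 6) (Fin 6) ℝ :=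
  Matrix.of fun i j =>
    if hi : (i : ℕ) < 3 then
      if hj : (j : ℕ) < 3 then P ⟨i, hi⟩ ⟨j, hj⟩
      else Q ⟨i, hi⟩ ⟨(j : ℕ) - 3, by have := j.isLt; omega⟩
    else
      if hj : (j : ℕ) < 3 then R ⟨(i : ℕ) - 3, by have := i.isLt; omega⟩ ⟨j, hj⟩
      else S ⟨(i : ℕ) - 3, by have := i.isLt; omega⟩ ⟨(j : ℕ) - 3, by have := j.isLt; omega⟩

/-- The principal-symbol matrix `A⁰` of the Maxwell evolution system. -/
def A0mat (G : Fin 4 → Fin 4 → Fin 4 → Fin 4 → ℝ) : Matrix (Fin 6) (Fin 6) ℝ :=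
  blk (Matrix.of fun μ ν => ginv G 0 μ.succ 0 ν.succ) 0 0 1

/-- The principal-symbol matrices `A^α`, `α ∈ {1,2,3}`, of the Maxwell evolution system. -/
def Aalpha (G : Fin 4 → Fin 4 → Fin 4 → Fin 4 → ℝ) (α : Fin 3) : Matrix (Fin 6) (Fin 6) ℝ :=
  blk
    (Matrix.of fun μ ν => -(ginv G 0 μ.succ ν.succ α.succ) - ginv G 0 ν.succ μ.succ α.succ)
    (Matrix.of fun μ ν => -(1 / 2) *
      ∑ γ : Fin 3, ∑ δ : Fin 3, vol G 0 ν.succ γ.succ δ.succ * ginv G γ.succ δ.succ μ.succ α.succ)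
    (Matrix.of fun μ ν => volInv G 0 μ.succ ν.succ α.succ)
    0

/-- The matrix `C(k) = -(A⁰)⁻¹ (A¹k₁ + A²k₂ + A³k₃)` of the evolution system. -/
def Cmat (G : Fin 4 → Fin 4 → Fin 4 → Fin 4 → ℝ) (k : Fin 4 → ℝ) :
    Matrix (Fin 6) (Fin 6) ℝ :=
  -((A0mat G)⁻¹ * ∑ α : Fin 3, k α.succ • Aalpha G α)

/-- The endomorphism `K = ω̂_G ∘ Ĝ⁻¹` of `Λ²((ℝ⁴)*)`, in Petrov coordinates. -/
def Kmat (G : Fin 4 → Fin 4 → Fin 4 → Fin 4 → ℝ) : Matrix (Fin 6) (Fin 6) ℝ :=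
  petrov (vol G) * (petrov G)⁻¹

/-- The components of a rank-4 covariant tensor in the basis whose `a`-th basis vector has
standard components `t^m_a` (the columns of `t`). -/
def transform (t : Matrix (Fin 4) (Fin 4) ℝ) (G : Fin 4 → Fin 4 → Fin 4 → Fin 4 → ℝ) :
    Fin 4 → Fin 4 → Fin 4 → Fin 4 → ℝ :=
  fun a b c d => ∑ m : Fin 4, ∑ n : Fin 4, ∑ p : Fin 4, ∑ q : Fin 4,
    t m a * t n b * t p c * t q d * G m n p q

/-!
The endomorphism `K = ω̂ ∘ Ĝ⁻¹` is self-adjoint for the Levi-Civita form on bivectors, so the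
eigenbivector `Ω₁ = (K - λ) Ω₂` at the bottom of a Jordan chain is isotropic, that is, simple:
`Ω₁ = k ∧ v`, where `k` can be chosen spatial. Let `B` be the bilinear form of `Ĝ⁻¹`. Any `x` in
the radical of `B (k ∧ ·, k ∧ ·)` yields a null vector of the symbol `A¹k₁ + A²k₂ + A³k₃`, nonzero
as soon as `k ∧ x ≠ 0`. If `A⁰` maps this null vector into the range of the symbol, then `C(k)` has
a Jordan chain at the eigenvalue `0`. By the Fredholm alternative this happens when `x` is
orthogonal, for a certain symmetric form, to the first halves of the left null vectors of the
symbol, which form a subspace of the spatial part of the radical.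

Since `Ω₁` is an eigenbivector, `v` lies in the radical. If `v` is not spatial, the subspace is
strictly smaller than the radical and a suitable `x` exists for dimensional reasons. If `v` is
spatial, every pair of independent vectors of the plane of `Ω₁` is a candidate for `(k, x)`. If the
candidates `(k, v)`, `(v, k)` and `(k + v, v)` all fail, then for each of these three wave covectors
all spatial covectors are first halves of left null vectors, and these relations produce a suitable
pair whose wave covector is transversal to the plane.
-/

section

open Matrix

local notation "f⁰" => (Pi.single 0 1 : Fin 4 → ℝ)

variable {G : Fin 4 → Fin 4 → Fin 4 → Fin 4 → ℝ}

theorem bilin_self_eq_zero_of_jordan_chain {R M : Type*} [CommRing R] [AddCommGroup M]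
    [Module R M] {B : LinearMap.BilinForm R M} {K : Module.End R M} (hK : B.IsSelfAdjoint K)
    {c : R} {u v : M} (hu : K u = c • u) (hv : K v = u + c • v) : B u u = 0 := by
  have h := hK u v
  rw [hu, hv, map_add, map_smul, map_smul, LinearMap.smul_apply] at h
  exact left_eq_add.mp (by rwa [add_comm] at h)

theorem exists_mulVec_eq_of_forall_vecMul_eq_zero {𝕜 m n : Type*} [Field 𝕜] [Fintype m]
    [Fintype n] {A : Matrix m n 𝕜} {y : m → 𝕜} (h : ∀ l, l ᵥ* A = 0 → l ⬝ᵥ y = 0) :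
    ∃ z, A *ᵥ z = y := by
  classical
  suffices y ∈ LinearMap.range A.mulVecLin from this
  by_contra hy
  obtain ⟨φ, hφy, hφ⟩ := Submodule.exists_le_ker_of_notMem hy
  obtain ⟨l, rfl⟩ := (dotProductEquiv 𝕜 m).surjective φ
  refine hφy (h l ?_)
  ext j
  have hj : l ⬝ᵥ A *ᵥ Pi.single j 1 = 0 := hφ ⟨_, rfl⟩
  rwa [dotProduct_mulVec, dotProduct_single_one] at hj

theorem finrank_eigenspace_lt_rootMultiplicity_charpoly {𝕜 V : Type*} [Field 𝕜]
    [AddCommGroup V] [Module 𝕜 V] [FiniteDimensional 𝕜 V] {f : Module.End 𝕜 V} {c : 𝕜} {u v : V}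
    (hu0 : u ≠ 0) (hu : f u = c • u) (hv : f v = u + c • v) :
    Module.finrank 𝕜 (f.eigenspace c) < f.charpoly.rootMultiplicity c := by
  rw [← LinearMap.finrank_maxGenEigenspace_eq]
  refine Submodule.finrank_lt_finrank_of_lt (lt_of_le_of_ne ?_ fun h => hu0 ?_)
  · exact (f.genEigenspace c).monotone le_top
  have hmem : v ∈ f.maxGenEigenspace c :=
    (f.mem_maxGenEigenspace c v).2 ⟨2, by simp [pow_two, hu, hv]⟩
  rw [← h, Module.End.mem_eigenspace_iff, hv] at hmem
  exact add_eq_right.mp hmem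

theorem finrank_ker_lt_rootMultiplicity_charpoly_map {𝕜 L n : Type*} [Field 𝕜] [Field L]
    [Algebra 𝕜 L] [Fintype n] [DecidableEq n] {A : Matrix n n 𝕜} {u v : n → 𝕜} (hu0 : u ≠ 0)
    (hu : A *ᵥ u = 0) (hv : A *ᵥ v = u) :
    Module.finrank L (LinearMap.ker (Matrix.toLin' (A.map (algebraMap 𝕜 L)))) <
      (A.map (algebraMap 𝕜 L)).charpoly.rootMultiplicity 0 := by
  have hmap (w : n → 𝕜) :
      Matrix.toLin' (A.map (algebraMap 𝕜 L)) (algebraMap 𝕜 L ∘ w) = algebraMap 𝕜 L ∘ (A *ᵥ w) :=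
    funext fun i => (RingHom.map_mulVec (algebraMap 𝕜 L) A w i).symm
  rw [← Module.End.eigenspace_zero, ← Matrix.charpoly_toLin']
  refine finrank_eigenspace_lt_rootMultiplicity_charpoly (u := algebraMap 𝕜 L ∘ u)
    (v := algebraMap 𝕜 L ∘ v) (fun h => hu0 ?_) ?_ ?_
  · exact funext fun i => (map_eq_zero (algebraMap 𝕜 L)).1 (congrFun h i)
  · rw [hmap, hu]; ext; simp
  · rw [hmap, hv, zero_smul, add_zero]

/-- The components of the simple bivector `a ∧ b` of two covectors, in the order of the Petrov
index pairs. -/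
def wedge : (Fin 4 → ℝ) →ₗ[ℝ] (Fin 4 → ℝ) →ₗ[ℝ] (Fin 6 → ℝ) :=
  LinearMap.mk₂ ℝ (fun a b A => a (pFst A) * b (pSnd A) - a (pSnd A) * b (pFst A))
    (fun a a' b => by ext A; simp only [Pi.add_apply]; ring)
    (fun c a b => by ext A; simp only [Pi.smul_apply, smul_eq_mul]; ring)
    (fun a b b' => by ext A; simp only [Pi.add_apply]; ring)
    (fun c a b => by ext A; simp only [Pi.smul_apply, smul_eq_mul]; ring)

theorem wedge_apply (a b : Fin 4 → ℝ) (A : Fin 6) :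
    wedge a b A = a (pFst A) * b (pSnd A) - a (pSnd A) * b (pFst A) :=
  rfl

theorem wedge_isAlt : wedge.IsAlt := fun a => by
  ext A; simp only [wedge_apply, Pi.zero_apply]; ring

theorem wedge_swap (a b : Fin 4 → ℝ) : wedge a b = -wedge b a :=
  (wedge_isAlt.neg b a).symm

theorem wedge_single_pFst_pSnd (A : Fin 6) :
    wedge (Pi.single (pFst A) 1) (Pi.single (pSnd A) 1) = Pi.single A 1 := by
  ext B; fin_cases A <;> fin_cases B <;> simp [wedge_apply, pFst, pSnd]

theorem mul_sub_mul_eq_bSgn_mul_wedge (a b : Fin 4 → ℝ) (i j : Fin 4) :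
    a i * b j - a j * b i = bSgn i j * wedge a b (bIdx i j) := by
  fin_cases i <;> fin_cases j <;> simp [bSgn, bIdx, wedge_apply, pFst, pSnd]

theorem wedge_ne_zero_iff {a b : Fin 4 → ℝ} :
    wedge a b ≠ 0 ↔ LinearIndependent ℝ ![a, b] := by
  rw [LinearIndependent.pair_iff]
  constructor
  · intro h s t hst
    have hs : s • wedge a b = 0 := by
      simpa [wedge_isAlt b] using congrArg (fun c => wedge c b) hst
    have ht : t • wedge a b = 0 := by
      simpa [wedge_isAlt a] using congrArg (wedge a) hst
    exact ⟨(smul_eq_zero.1 hs).resolve_right h, (smul_eq_zero.1 ht).resolve_right h⟩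
  · intro h hab
    have ha : a = 0 := funext fun i => by
      refine neg_eq_zero.1 (h (b i) (-a i) (funext fun j => ?_)).2
      have := mul_sub_mul_eq_bSgn_mul_wedge a b i j
      simp only [hab, Pi.zero_apply, mul_zero] at this
      simp only [Pi.add_apply, Pi.smul_apply, smul_eq_mul, Pi.zero_apply]
      linear_combination -this
    simpa [ha] using h 1 0

/-- Laplace expansion along the first two rows: complementary Petrov index pairs are interchanged
by reversing their order. -/
theorem det_eq_wedge_dotProduct_wedge_rev (a b c d : Fin 4 → ℝ) :
    (of ![a, b, c, d]).det = wedge a b ⬝ᵥ (wedge c d ∘ Fin.rev) := by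
  rw [det_succ_row_zero]
  simp only [det_fin_three, Fin.sum_univ_four, dotProduct, Fin.sum_univ_six, wedge_apply, pFst,
    pSnd, Function.comp_apply, Fin.reduceRev, submatrix_apply, of_apply, Fin.succAbove, cons_val,
    Fin.reduceSucc, Fin.reduceCastSucc, Fin.reduceLT, ↓reduceIte, Fin.coe_ofNat_eq_mod]
  ring

theorem eps_eq_det (a b c d : Fin 4) :
    eps a b c d =
      (of ![Pi.single a 1, Pi.single b 1, Pi.single c 1, Pi.single d (1 : ℝ)]).det := by
  unfold eps
  congr 1
  ext i j
  fin_cases i <;> simp [Pi.single_apply, eq_comm]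

theorem petrov_eps : petrov eps = Fin.revPerm.permMatrix ℝ := by
  ext A B
  simp only [petrov, of_apply, eps_eq_det, det_eq_wedge_dotProduct_wedge_rev,
    wedge_single_pFst_pSnd, single_one_dotProduct, Function.comp_apply]
  simp [Equiv.Perm.permMatrix, PEquiv.toMatrix_apply, Pi.single_apply, eq_comm]

theorem toBilin'_petrov_eps_wedge (a b c d : Fin 4 → ℝ) :
    toBilin' (petrov eps) (wedge a b) (wedge c d) = (of ![a, b, c, d]).det := by
  rw [toBilin'_apply', petrov_eps, permMatrix_mulVec, det_eq_wedge_dotProduct_wedge_rev]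
  rfl

theorem petrov_eps_transpose : (petrov eps)ᵀ = petrov eps := by
  rw [petrov_eps, transpose_permMatrix]
  rfl

theorem petrov_eps_mul_self : petrov eps * petrov eps = 1 := by
  have h : Fin.revPerm * Fin.revPerm = (1 : Equiv.Perm (Fin 6)) := by ext; simp
  rw [petrov_eps, ← permMatrix_mul, h, permMatrix_one]

theorem sum_mul_mul_eq_sum_wedge {f : Fin 4 → Fin 4 → ℝ} (hf : ∀ m n, f m n = -f n m)
    (a b : Fin 4 → ℝ) :
    ∑ m, ∑ n, a m * b n * f m n = ∑ A, wedge a b A * f (pFst A) (pSnd A) := by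
  have hd (m : Fin 4) : f m m = 0 := self_eq_neg.1 (hf m m)
  simp only [Fin.sum_univ_four, Fin.sum_univ_six, wedge_apply, pFst, pSnd, cons_val, hd]
  rw [hf 1 0, hf 2 0, hf 3 0, hf 2 1, hf 1 3, hf 3 2]
  ring

theorem sum_eq_toBilin'_petrov_wedge
    (h₁ : ∀ a b c d, G a b c d = -G b a c d) (h₂ : ∀ a b c d, G a b c d = -G a b d c)
    (a b c d : Fin 4 → ℝ) :
    ∑ m, ∑ n, ∑ p, ∑ q, a m * b n * c p * d q * G m n p q =
      toBilin' (petrov G) (wedge a b) (wedge c d) := by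
  have h (m n : Fin 4) : ∑ p, ∑ q, a m * b n * c p * d q * G m n p q =
      a m * b n * ∑ A, wedge c d A * G m n (pFst A) (pSnd A) := by
    rw [← sum_mul_mul_eq_sum_wedge (h₂ m n)]
    simp only [Finset.mul_sum, mul_assoc]
  simp only [h]
  rw [sum_mul_mul_eq_sum_wedge, toBilin'_apply]
  · simp only [Finset.mul_sum, petrov, of_apply]
    refine Finset.sum_congr rfl fun A _ => Finset.sum_congr rfl fun B _ => by ring
  · intro m n
    rw [← Finset.sum_neg_distrib]
    exact Finset.sum_congr rfl fun A _ => by rw [h₁, mul_neg]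

theorem petrov_fromPetrov (M : Matrix (Fin 6) (Fin 6) ℝ) : petrov (fromPetrov M) = M := by
  have hidx : ∀ A, bIdx (pFst A) (pSnd A) = A := by decide
  have hsgn (A : Fin 6) : bSgn (pFst A) (pSnd A) = 1 := by
    fin_cases A <;> simp [bSgn, pFst, pSnd]
  ext A B
  simp [petrov, fromPetrov, hidx, hsgn]

theorem bIdx_comm : ∀ a b, bIdx a b = bIdx b a := by decide

theorem bSgn_swap (a b : Fin 4) : bSgn a b = -bSgn b a := by
  fin_cases a <;> fin_cases b <;> simp [bSgn]

theorem fromPetrov_swap_left (M : Matrix (Fin 6) (Fin 6) ℝ) (a b c d : Fin 4) :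
    fromPetrov M a b c d = -fromPetrov M b a c d := by
  rw [fromPetrov, fromPetrov, bSgn_swap a b, bIdx_comm a b]
  ring

theorem fromPetrov_swap_right (M : Matrix (Fin 6) (Fin 6) ℝ) (a b c d : Fin 4) :
    fromPetrov M a b c d = -fromPetrov M a b d c := by
  rw [fromPetrov, fromPetrov, bSgn_swap c d, bIdx_comm c d]
  ring

theorem sum_fromPetrov_eq_toBilin'_wedge (M : Matrix (Fin 6) (Fin 6) ℝ) (a b c d : Fin 4 → ℝ) :
    ∑ m, ∑ n, ∑ p, ∑ q, a m * b n * c p * d q * fromPetrov M m n p q =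
      toBilin' M (wedge a b) (wedge c d) := by
  rw [sum_eq_toBilin'_petrov_wedge (fromPetrov_swap_left M) (fromPetrov_swap_right M),
    petrov_fromPetrov]

/-- The second compound of `t`: the matrix by which `t` acts on bivectors, in the order of the
Petrov index pairs. -/
def compound (t : Matrix (Fin 4) (Fin 4) ℝ) : Matrix (Fin 6) (Fin 6) ℝ :=
  of fun A B => wedge (t.col (pFst B)) (t.col (pSnd B)) A

theorem compound_transpose (t : Matrix (Fin 4) (Fin 4) ℝ) : compound tᵀ = (compound t)ᵀ := by
  ext A B
  simp only [compound, of_apply, wedge_apply, col_apply, transpose_apply]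
  ring

theorem compound_transpose_mul_mul_compound_apply (M : Matrix (Fin 6) (Fin 6) ℝ)
    (t : Matrix (Fin 4) (Fin 4) ℝ) (A B : Fin 6) :
    ((compound t)ᵀ * M * compound t) A B =
      toBilin' M (wedge (t.col (pFst A)) (t.col (pSnd A)))
        (wedge (t.col (pFst B)) (t.col (pSnd B))) := by
  have h (C : Fin 6) :
      toLin' (compound t) (Pi.single C 1) = wedge (t.col (pFst C)) (t.col (pSnd C)) := by
    rw [toLin'_apply, mulVec_single_one]
    rfl
  rw [← toBilin'_single ((compound t)ᵀ * M * compound t), ← toBilin'_comp,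
    LinearMap.BilinForm.comp_apply, h, h]

theorem petrov_transform
    (h₁ : ∀ a b c d, G a b c d = -G b a c d) (h₂ : ∀ a b c d, G a b c d = -G a b d c)
    (t : Matrix (Fin 4) (Fin 4) ℝ) :
    petrov (transform t G) = (compound t)ᵀ * petrov G * compound t := by
  ext A B
  rw [compound_transpose_mul_mul_compound_apply, ← sum_eq_toBilin'_petrov_wedge h₁ h₂]
  rfl

theorem compound_transpose_mul_petrov_eps_mul_compound (t : Matrix (Fin 4) (Fin 4) ℝ) :
    (compound t)ᵀ * petrov eps * compound t = t.det • petrov eps := by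
  ext A B
  rw [compound_transpose_mul_mul_compound_apply, toBilin'_petrov_eps_wedge, Matrix.smul_apply,
    petrov, of_apply, eps_eq_det, smul_eq_mul, mul_comm, ← det_transpose t, ← det_mul]
  congr 1
  ext i j
  fin_cases i <;> exact (congrFun (single_one_vecMul _ tᵀ) j).symm

theorem compound_mul_petrov_eps_mul_compound_transpose (t : Matrix (Fin 4) (Fin 4) ℝ) :
    compound t * petrov eps * (compound t)ᵀ = t.det • petrov eps := by
  simpa [compound_transpose] using compound_transpose_mul_petrov_eps_mul_compound tᵀ

theorem compound_mul_smul_eq_one {t : Matrix (Fin 4) (Fin 4) ℝ} (ht : IsUnit t.det) :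
    compound t * (t.det⁻¹ • (petrov eps * (compound t)ᵀ * petrov eps)) = 1 := by
  rw [Matrix.mul_smul, ← mul_assoc, ← mul_assoc, compound_mul_petrov_eps_mul_compound_transpose,
    Matrix.smul_mul, petrov_eps_mul_self, smul_smul, inv_mul_cancel₀ ht.ne_zero, one_smul]

theorem isUnit_det_compound {t : Matrix (Fin 4) (Fin 4) ℝ} (ht : IsUnit t.det) :
    IsUnit (compound t).det :=
  isUnit_det_of_right_inverse (compound_mul_smul_eq_one ht)

theorem isUnit_det_petrov_transform
    (h₁ : ∀ a b c d, G a b c d = -G b a c d) (h₂ : ∀ a b c d, G a b c d = -G a b d c)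
    (hinv : IsUnit (petrov G).det) {t : Matrix (Fin 4) (Fin 4) ℝ} (ht : IsUnit t.det) :
    IsUnit (petrov (transform t G)).det := by
  rw [petrov_transform h₁ h₂, det_mul, det_mul, det_transpose]
  exact ((isUnit_det_compound ht).mul hinv).mul (isUnit_det_compound ht)

theorem compound_transpose_mulVec_ne_zero {t : Matrix (Fin 4) (Fin 4) ℝ} (ht : IsUnit t.det)
    {Ω : Fin 6 → ℝ} (hΩ : Ω ≠ 0) : (compound t)ᵀ *ᵥ Ω ≠ 0 := fun h =>
  hΩ (eq_zero_of_mulVec_eq_zero (by rw [det_transpose]; exact (isUnit_det_compound ht).ne_zero) h)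

theorem petrov_transform_inv_mulVec
    (h₁ : ∀ a b c d, G a b c d = -G b a c d) (h₂ : ∀ a b c d, G a b c d = -G a b d c)
    {t : Matrix (Fin 4) (Fin 4) ℝ} (ht : IsUnit t.det) {μ : ℝ} {Ω : Fin 6 → ℝ}
    (hΩ : (petrov G)⁻¹ *ᵥ Ω = μ • petrov eps *ᵥ Ω) :
    (petrov (transform t G))⁻¹ *ᵥ (compound t)ᵀ *ᵥ Ω =
      (μ / t.det) • petrov eps *ᵥ (compound t)ᵀ *ᵥ Ω := by
  have hT : IsUnit (compound t)ᵀ.det := by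
    rw [det_transpose]
    exact isUnit_det_compound ht
  rw [petrov_transform h₁ h₂, Matrix.mul_inv_rev, Matrix.mul_inv_rev, mulVec_mulVec, mul_assoc,
    mul_assoc, nonsing_inv_mul _ hT, mul_one, ← mulVec_mulVec, hΩ,
    inv_eq_right_inv (compound_mul_smul_eq_one ht), mulVec_smul, mulVec_mulVec, Matrix.smul_mul,
    mul_assoc, petrov_eps_mul_self, mul_one, smul_mulVec, smul_smul, mulVec_mulVec,
    div_eq_mul_inv]

theorem toBilin'_petrov_eps_compound_transpose_mulVec (t : Matrix (Fin 4) (Fin 4) ℝ)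
    (Ω : Fin 6 → ℝ) :
    toBilin' (petrov eps) ((compound t)ᵀ *ᵥ Ω) ((compound t)ᵀ *ᵥ Ω) =
      t.det * toBilin' (petrov eps) Ω Ω := by
  rw [← toLin'_apply, ← LinearMap.BilinForm.comp_apply, toBilin'_comp, transpose_transpose,
    compound_mul_petrov_eps_mul_compound_transpose, map_smul, LinearMap.smul_apply,
    LinearMap.smul_apply, smul_eq_mul]

/-- The factor by which the area metric volume form differs from the Levi-Civita symbol. -/
def volDensity (G : Fin 4 → Fin 4 → Fin 4 → Fin 4 → ℝ) : ℝ :=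
  |(petrov G).det| ^ ((1 : ℝ) / 6)

theorem volInv_eq (a b c d : Fin 4) :
    volInv G a b c d = (volDensity G)⁻¹ * eps a b c d := by
  rw [volInv, volDensity, neg_div, Real.rpow_neg (abs_nonneg _)]

theorem volDensity_ne_zero (hinv : IsUnit (petrov G).det) :
    volDensity G ≠ 0 :=
  (Real.rpow_pos_of_pos (abs_pos.2 hinv.ne_zero) _).ne'

theorem petrov_vol :
    petrov (vol G) = volDensity G • petrov eps :=
  rfl

theorem petrov_transpose
    (hsym : ∀ a b c d, G a b c d = G c d a b) : (petrov G)ᵀ = petrov G :=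
  ext fun _ _ => hsym _ _ _ _

theorem isSymm_toBilin'_inv_petrov_transform
    (h₁ : ∀ a b c d, G a b c d = -G b a c d) (h₂ : ∀ a b c d, G a b c d = -G a b d c)
    (hsym : ∀ a b c d, G a b c d = G c d a b) (t : Matrix (Fin 4) (Fin 4) ℝ) :
    (toBilin' (petrov (transform t G))⁻¹).IsSymm := by
  refine isSymm_toBilin'_iff_isSymm.2 (IsSymm.inv ?_)
  rw [IsSymm, petrov_transform h₁ h₂, transpose_mul, transpose_mul, transpose_transpose,
    petrov_transpose hsym, mul_assoc]

theorem isSelfAdjoint_Kmat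
    (hsym : ∀ a b c d, G a b c d = G c d a b) :
    (toBilin' (petrov eps)).IsSelfAdjoint (toLin' (Kmat G)) := by
  refine (isAdjointPair_toLinearMap₂' _ _ _ _).2 ?_
  rw [Matrix.IsAdjointPair, Kmat, petrov_vol, transpose_mul, transpose_nonsing_inv,
    petrov_transpose hsym, transpose_smul, petrov_eps_transpose, Matrix.smul_mul, Matrix.mul_smul,
    Matrix.smul_mul, Matrix.mul_smul, mul_assoc, ← mul_assoc (petrov eps), petrov_eps_mul_self,
    mul_one, one_mul]

theorem inv_petrov_mulVec_of_Kmat_mulVec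
    (hinv : IsUnit (petrov G).det) {c : ℝ} {Ω : Fin 6 → ℝ} (hΩ : Kmat G *ᵥ Ω = c • Ω) :
    (petrov G)⁻¹ *ᵥ Ω = (c / volDensity G) • petrov eps *ᵥ Ω := by
  rw [div_eq_inv_mul, mul_smul, ← mulVec_smul, ← hΩ, Kmat, petrov_vol, Matrix.smul_mul,
    smul_mulVec, mulVec_smul, inv_smul_smul₀ (volDensity_ne_zero hinv), mulVec_mulVec, ← mul_assoc,
    petrov_eps_mul_self, one_mul]

theorem exists_wedge_eq {F : Fin 6 → ℝ} (hF : toBilin' (petrov eps) F F = 0) (hF0 : F ≠ 0) :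
    ∃ a b, wedge a b = F := by
  obtain ⟨A, hA⟩ := Function.ne_iff.1 hF0
  let row : Fin 4 → Fin 4 → ℝ := fun i j => bSgn i j * F (bIdx i j)
  -- By the Plücker relation the rows of the skew matrix of `F` span its plane.
  have hrow : wedge (row (pFst A)) (row (pSnd A)) = F A • F := by
    have hplucker : F 0 * F 5 + F 1 * F 4 + F 2 * F 3 = 0 := by
      rw [toBilin'_apply', petrov_eps, permMatrix_mulVec] at hF
      have : F ⬝ᵥ F ∘ Fin.revPerm = 2 * (F 0 * F 5 + F 1 * F 4 + F 2 * F 3) := by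
        rw [dotProduct, Fin.sum_univ_six]
        simp only [Function.comp_apply, Fin.revPerm_apply, Fin.isValue, Fin.reduceRev]
        ring
      linarith
    ext C
    fin_cases A <;> fin_cases C <;>
      simp [wedge_apply, row, bSgn, bIdx, pFst, pSnd] <;> linarith
  exact ⟨(F A)⁻¹ • row (pFst A), row (pSnd A), by
    rw [map_smul, LinearMap.smul_apply, hrow, inv_smul_smul₀ hA]⟩

section Resonance

/-- The span of `f¹, f², f³`. -/
def spatial : Submodule ℝ (Fin 4 → ℝ) :=
  LinearMap.ker (LinearMap.proj 0)

theorem mem_spatial {x : Fin 4 → ℝ} : x ∈ spatial ↔ x 0 = 0 :=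
  Iff.rfl

theorem exists_eq_smul_add_spatial (x : Fin 4 → ℝ) : ∃ y ∈ spatial, x = x 0 • f⁰ + y :=
  ⟨x - x 0 • f⁰, by simp [mem_spatial], (add_sub_cancel _ _).symm⟩

theorem finrank_spatial : Module.finrank ℝ spatial = 3 := by
  have h : (LinearMap.proj 0 : Module.Dual ℝ (Fin 4 → ℝ)) ≠ 0 := fun h => by
    simpa using LinearMap.congr_fun h f⁰
  have := Module.Dual.finrank_ker_add_one_of_ne_zero h
  rwa [Module.finrank_fin_fun, Nat.succ_inj] at this

theorem exists_spatial_wedge_eq (a b : Fin 4 → ℝ) :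
    ∃ k ∈ spatial, ∃ v, wedge k v = wedge a b := by
  by_cases ha : a ∈ spatial
  · exact ⟨a, ha, b, rfl⟩
  · refine ⟨b - (b 0 / a 0) • a, ?_, -a, ?_⟩
    · have ha' : a 0 ≠ 0 := ha
      simp [mem_spatial, ha']
    · simp [wedge_isAlt a, wedge_swap a b]

theorem wedge_ne_zero_of_dual {a c : Fin 4 → ℝ} {φ : Module.Dual ℝ (Fin 4 → ℝ)} (ha : a ≠ 0)
    (hφa : φ a = 0) (hφc : φ c ≠ 0) : wedge c a ≠ 0 := by
  rw [wedge_ne_zero_iff, LinearIndependent.pair_iff]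
  intro s t h
  obtain rfl : s = 0 := by simpa [hφa, hφc] using congrArg φ h
  simpa [ha] using h

theorem spatial_le_of_dual {a b c : Fin 4 → ℝ} {W : Submodule ℝ (Fin 4 → ℝ)}
    {φ : Module.Dual ℝ (Fin 4 → ℝ)} (hab : wedge a b ≠ 0) (ha : a ∈ spatial ⊓ W)
    (hb : b ∈ spatial ⊓ W) (hc : c ∈ spatial ⊓ W) (hφa : φ a = 0) (hφb : φ b = 0)
    (hφc : φ c ≠ 0) : spatial ≤ W := by
  have hle {U : Submodule ℝ (Fin 4 → ℝ)} (ha : a ∈ U) (hb : b ∈ U) :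
      Submodule.span ℝ (Set.range ![a, b]) ≤ U :=
    Submodule.span_le.2 (Set.range_subset_iff.2 (Fin.forall_fin_two.2 ⟨ha, hb⟩))
  have hlt : Submodule.span ℝ (Set.range ![a, b]) < spatial ⊓ W :=
    (hle ha hb).lt_of_not_ge fun h => hφc (hle (U := LinearMap.ker φ) hφa hφb (h hc))
  have hfin := Submodule.finrank_lt_finrank_of_lt hlt
  rw [finrank_span_eq_card (wedge_ne_zero_iff.1 hab), Fintype.card_fin] at hfin
  exact inf_eq_left.1
    (Submodule.eq_of_le_of_finrank_le inf_le_left (finrank_spatial.trans_le hfin))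

variable (B : LinearMap.BilinForm ℝ (Fin 6 → ℝ)) (k : Fin 4 → ℝ)

/-- The radical of the quadratic form `x ↦ B (k ∧ x, k ∧ x)`, which governs the waves of
frequency zero with spatial wave covector `k`. -/
def zeroModes : Submodule ℝ (Fin 4 → ℝ) :=
  LinearMap.ker (B.compl₁₂ (wedge k) (wedge k))

/-- The spatial covectors that occur as the first halves of the left null vectors of the symbol
at the wave covector `k`. -/
def adjointModes : Submodule ℝ (Fin 4 → ℝ) where
  carrier := {p | p ∈ spatial ∧ (∀ y ∈ spatial, ∀ z ∈ spatial, B (wedge p k) (wedge y z) = 0) ∧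
    B (wedge p k) (wedge f⁰ k) = 0}
  zero_mem' := by simp
  add_mem' := by
    rintro p q ⟨hp, hp', hp''⟩ ⟨hq, hq', hq''⟩
    refine ⟨add_mem hp hq, fun y hy z hz => ?_, ?_⟩
    · simp [hp' y hy z hz, hq' y hy z hz]
    · simp [hp'', hq'']
  smul_mem' := by
    rintro c p ⟨hp, hp', hp''⟩
    refine ⟨Submodule.smul_mem _ c hp, fun y hy z hz => ?_, ?_⟩
    · simp [hp' y hy z hz]
    · simp [hp'']

/-- The symmetric bilinear form through which the matrix `A⁰` pairs the zero modes at `k` with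
the adjoint modes. -/
def coupling : LinearMap.BilinForm ℝ (Fin 4 → ℝ) :=
  B.compl₁₂ (wedge f⁰) (wedge.flip k) + (B.compl₁₂ (wedge f⁰) (wedge.flip k)).flip

/-- A spatial covector `k` with a zero mode `x`, not proportional to `k`, that is decoupled from
all adjoint modes. By the Fredholm alternative the null vector of the symbol made from `x` then
has a preimage. -/
structure IsResonant (x : Fin 4 → ℝ) : Prop where
  mem_spatial : k ∈ spatial
  wedge_ne_zero : wedge k x ≠ 0
  mem_zeroModes : x ∈ zeroModes B k
  coupling_eq_zero : ∀ p ∈ adjointModes B k, coupling B k x p = 0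

variable {B k}

theorem mem_zeroModes {x : Fin 4 → ℝ} :
    x ∈ zeroModes B k ↔ ∀ y, B (wedge k x) (wedge k y) = 0 :=
  LinearMap.ext_iff

theorem mem_adjointModes {p : Fin 4 → ℝ} :
    p ∈ adjointModes B k ↔ p ∈ spatial ∧
      (∀ y ∈ spatial, ∀ z ∈ spatial, B (wedge p k) (wedge y z) = 0) ∧
      B (wedge p k) (wedge f⁰ k) = 0 :=
  Iff.rfl

theorem coupling_apply (x p : Fin 4 → ℝ) :
    coupling B k x p = B (wedge f⁰ x) (wedge p k) + B (wedge f⁰ p) (wedge x k) :=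
  rfl

theorem coupling_comm (x p : Fin 4 → ℝ) : coupling B k x p = coupling B k p x :=
  add_comm _ _

theorem self_mem_adjointModes (hk : k ∈ spatial) : k ∈ adjointModes B k :=
  mem_adjointModes.2 ⟨hk, by simp [wedge_isAlt k], by simp [wedge_isAlt k]⟩

theorem adjointModes_le_zeroModes (hk : k ∈ spatial) : adjointModes B k ≤ zeroModes B k := by
  rintro p ⟨-, hp, hp0⟩
  refine mem_zeroModes.2 fun x => ?_
  obtain ⟨y, hy, hx⟩ := exists_eq_smul_add_spatial x
  rw [hx, wedge_swap k p, wedge_swap k, map_neg, map_neg, LinearMap.neg_apply, neg_neg, map_add,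
    LinearMap.add_apply, map_smul, LinearMap.smul_apply, map_add, map_smul, hp0, hp y hy k hk,
    smul_zero, add_zero]

theorem coupling_self_right (hB : B.IsSymm) {x : Fin 4 → ℝ} (hx : x ∈ zeroModes B k) :
    coupling B k x k = 0 := by
  rw [coupling_apply, wedge_isAlt k, map_zero, zero_add, hB.eq, wedge_swap x, wedge_swap f⁰,
    map_neg, map_neg, LinearMap.neg_apply, mem_zeroModes.1 hx, neg_zero, neg_zero]

/-- The map `x ↦ coupling x + ℓ x • ℓ` from the zero modes to the dual of the strictly smaller
space of adjoint modes has a kernel, and evaluation at the adjoint mode `k` shows that the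
functional `ℓ`, which does not vanish at `k`, vanishes on this kernel. -/
theorem exists_isResonant_of_zeroMode (hB : B.IsSymm) (hk : k ∈ spatial) (hk0 : k ≠ 0)
    {v : Fin 4 → ℝ} (hv : v ∈ zeroModes B k) (hv0 : v ∉ spatial) : ∃ x, IsResonant B k x := by
  obtain ⟨i, hi⟩ := Function.ne_iff.1 hk0
  let ℓ : Module.Dual ℝ (Fin 4 → ℝ) := LinearMap.proj i
  let S := adjointModes B k
  let Z := zeroModes B k
  have hSZ : S < Z := (adjointModes_le_zeroModes hk).lt_of_not_ge fun h => hv0 (h hv).1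
  let L : Z →ₗ[ℝ] Module.Dual ℝ S :=
    S.subtype.dualMap ∘ₗ (coupling B k + ℓ.smulRight ℓ) ∘ₗ Z.subtype
  have hL : Module.finrank ℝ (Module.Dual ℝ S) < Module.finrank ℝ Z := by
    rw [Subspace.dual_finrank_eq]
    exact Submodule.finrank_lt_finrank_of_lt hSZ
  obtain ⟨⟨x, hxZ⟩, hxL, hx0⟩ :=
    Submodule.exists_mem_ne_zero_of_ne_bot (LinearMap.ker_ne_bot_of_finrank_lt (f := L) hL)
  have hx (p) (hp : p ∈ S) : coupling B k x p + x i * p i = 0 :=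
    LinearMap.congr_fun hxL ⟨p, hp⟩
  have hxi : x i = 0 := by
    have := hx k (self_mem_adjointModes hk)
    rw [coupling_self_right hB hxZ, zero_add] at this
    exact (mul_eq_zero.1 this).resolve_right hi
  refine ⟨x, hk, wedge_ne_zero_of_dual (φ := ℓ) ?_ hxi hi, hxZ, fun p hp => ?_⟩
  · exact fun h => hx0 (Subtype.ext h)
  · simpa [hxi] using hx p hp

/-- Spatial covectors `a` and `b` whose wedge product is a nonzero eigenbivector of `B` relative
to the Levi-Civita form. -/
structure IsEigenplane (B : LinearMap.BilinForm ℝ (Fin 6 → ℝ)) (a b : Fin 4 → ℝ) : Prop where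
  left_mem : a ∈ spatial
  right_mem : b ∈ spatial
  wedge_ne_zero : wedge a b ≠ 0
  exists_eq : ∃ μ : ℝ, ∀ X, B X (wedge a b) = μ * toBilin' (petrov eps) X (wedge a b)

namespace IsEigenplane

variable {a b : Fin 4 → ℝ}

theorem swap (h : IsEigenplane B a b) : IsEigenplane B b a where
  left_mem := h.right_mem
  right_mem := h.left_mem
  wedge_ne_zero := by simpa [wedge_swap b a] using h.wedge_ne_zero
  exists_eq := by simpa [wedge_swap b a] using h.exists_eq

theorem add_left (h : IsEigenplane B a b) : IsEigenplane B (a + b) b where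
  left_mem := add_mem h.left_mem h.right_mem
  right_mem := h.right_mem
  wedge_ne_zero := by simpa [wedge_isAlt b] using h.wedge_ne_zero
  exists_eq := by simpa [wedge_isAlt b] using h.exists_eq

theorem apply_wedge_spatial (h : IsEigenplane B a b) {y z : Fin 4 → ℝ} (hy : y ∈ spatial)
    (hz : z ∈ spatial) : B (wedge y z) (wedge a b) = 0 := by
  obtain ⟨μ, hμ⟩ := h.exists_eq
  rw [hμ, toBilin'_petrov_eps_wedge, det_eq_zero_of_column_eq_zero 0, mul_zero]
  exact Fin.forall_fin_succ.2
    ⟨hy, Fin.forall_fin_succ.2 ⟨hz, Fin.forall_fin_two.2 ⟨h.left_mem, h.right_mem⟩⟩⟩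

theorem apply_wedge_left (h : IsEigenplane B a b) (y : Fin 4 → ℝ) :
    B (wedge y a) (wedge a b) = 0 := by
  obtain ⟨μ, hμ⟩ := h.exists_eq
  rw [hμ, toBilin'_petrov_eps_wedge, det_zero_of_row_eq (i := 1) (j := 2) (by decide) rfl,
    mul_zero]

theorem apply_wedge_right (h : IsEigenplane B a b) (y : Fin 4 → ℝ) :
    B (wedge y b) (wedge a b) = 0 := by
  simpa [wedge_swap b a] using h.swap.apply_wedge_left y

theorem right_mem_zeroModes (hB : B.IsSymm) (h : IsEigenplane B a b) : b ∈ zeroModes B a :=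
  mem_zeroModes.2 fun y => by
    rw [hB.eq, wedge_swap a y, map_neg, LinearMap.neg_apply, h.apply_wedge_left, neg_zero]

theorem right_mem_adjointModes (hB : B.IsSymm) (h : IsEigenplane B a b) :
    b ∈ adjointModes B a := by
  refine mem_adjointModes.2 ⟨h.right_mem, fun y hy z hz => ?_, ?_⟩
  · rw [hB.eq, wedge_swap b a, map_neg, h.apply_wedge_spatial hy hz, neg_zero]
  · rw [hB.eq, wedge_swap b a, map_neg, h.apply_wedge_left, neg_zero]

theorem coupling_right_left (hB : B.IsSymm) (h : IsEigenplane B a b) : coupling B a b a = 0 :=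
  coupling_self_right hB (h.right_mem_zeroModes hB)

theorem coupling_right_right (h : IsEigenplane B a b) : coupling B a b b = 0 := by
  rw [coupling_apply, wedge_swap b a, map_neg, h.apply_wedge_right, neg_zero, add_zero]

theorem exists_coupling_ne_zero (hB : B.IsSymm) (h : IsEigenplane B a b)
    (hres : ¬ IsResonant B a b) : ∃ c ∈ adjointModes B a, coupling B a b c ≠ 0 := by
  contrapose! hres
  exact ⟨h.left_mem, h.wedge_ne_zero, h.right_mem_zeroModes hB, hres⟩

theorem spatial_le_adjointModes (hB : B.IsSymm) (h : IsEigenplane B a b)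
    (hres : ¬ IsResonant B a b) : spatial ≤ adjointModes B a := by
  obtain ⟨c, hc, hbc⟩ := h.exists_coupling_ne_zero hB hres
  exact spatial_le_of_dual h.wedge_ne_zero ⟨h.left_mem, self_mem_adjointModes h.left_mem⟩
    ⟨h.right_mem, h.right_mem_adjointModes hB⟩ ⟨hc.1, hc⟩ (h.coupling_right_left hB)
    h.coupling_right_right hbc

/-- If no pair in the plane itself is resonant, a resonance is found at a wave covector `c` that is
transversal to the plane and isotropic for `coupling B a`. -/
theorem isResonant_of_spatial_le_adjointModes (hB : B.IsSymm) (h : IsEigenplane B a b)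
    (ha : spatial ≤ adjointModes B a) (hb : spatial ≤ adjointModes B b)
    (hab : spatial ≤ adjointModes B (a + b)) {c : Fin 4 → ℝ} (hc : c ∈ spatial)
    (hbc : coupling B a b c ≠ 0) (hcc : coupling B a c c = 0) : IsResonant B c a := by
  have ha0 : a ≠ 0 := fun h0 => h.wedge_ne_zero (by simp [h0])
  have hca : wedge c a ≠ 0 := wedge_ne_zero_of_dual ha0 (h.coupling_right_left hB) hbc
  have hzero : a ∈ zeroModes B c := mem_zeroModes.2 fun x => by
    obtain ⟨y, hy, hx⟩ := exists_eq_smul_add_spatial x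
    have h0 : B (wedge c a) (wedge f⁰ c) = 0 := by
      rw [coupling_apply, ← two_mul] at hcc
      rw [hB.eq]
      exact (mul_eq_zero.1 hcc).resolve_left two_ne_zero
    rw [hx, map_add, map_smul, wedge_swap c f⁰, map_add, map_smul, map_neg, h0, neg_zero,
      smul_zero, zero_add, (ha hc).2.1 c hc y hy]
  have haa : coupling B c a a = 0 := by
    rw [coupling_apply, ← two_mul, wedge_swap a c, map_neg, hB.eq, (ha hc).2.2, neg_zero, mul_zero]
  have hba : coupling B c a b = 0 := by
    have := (hab hc).2.2
    simp only [map_add, LinearMap.add_apply, (ha hc).2.2, (hb hc).2.2] at this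
    rw [coupling_apply, hB.eq, hB.eq (wedge f⁰ b), wedge_swap b, wedge_swap a, map_neg, map_neg,
      LinearMap.neg_apply, LinearMap.neg_apply]
    linarith
  have hle : spatial ≤ LinearMap.ker (coupling B c a) :=
    spatial_le_of_dual h.wedge_ne_zero ⟨h.left_mem, haa⟩ ⟨h.right_mem, hba⟩
      ⟨hc, coupling_self_right hB hzero⟩ (h.coupling_right_left hB) h.coupling_right_right hbc
  exact ⟨hc, hca, hzero, fun p hp => hle hp.1⟩

theorem exists_isResonant (hB : B.IsSymm) (h : IsEigenplane B a b) :
    ∃ k x, IsResonant B k x := by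
  by_contra! hres
  obtain ⟨c, hc, hbc⟩ := h.exists_coupling_ne_zero hB (hres a b)
  let s : ℝ := -(coupling B a c c / (2 * coupling B a b c))
  refine hres (c + s • b) a (h.isResonant_of_spatial_le_adjointModes hB
    (h.spatial_le_adjointModes hB (hres _ _)) (h.swap.spatial_le_adjointModes hB (hres _ _))
    (h.add_left.spatial_le_adjointModes hB (hres _ _))
    (add_mem hc.1 (Submodule.smul_mem _ s h.right_mem)) ?_ ?_)
  · rwa [map_add, map_smul, h.coupling_right_right, smul_zero, add_zero]
  · simp only [map_add, map_smul, LinearMap.add_apply, LinearMap.smul_apply, smul_eq_mul,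
      h.coupling_right_right, coupling_comm c b, s]
    field_simp
    ring

end IsEigenplane

theorem exists_isResonant_of_isotropic_eigenvector (hB : B.IsSymm) {F : Fin 6 → ℝ} (hF0 : F ≠ 0)
    (hFF : toBilin' (petrov eps) F F = 0) {μ : ℝ}
    (hF : ∀ X, B X F = μ * toBilin' (petrov eps) X F) : ∃ k x, IsResonant B k x := by
  obtain ⟨a, b, rfl⟩ := exists_wedge_eq hFF hF0
  obtain ⟨k, hk, v, hkv⟩ := exists_spatial_wedge_eq a b
  rw [← hkv] at hF0 hF
  by_cases hv : v ∈ spatial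
  · exact IsEigenplane.exists_isResonant hB ⟨hk, hv, hF0, μ, hF⟩
  have hzero : v ∈ zeroModes B k := mem_zeroModes.2 fun y => by
    rw [hB.eq, hF, toBilin'_petrov_eps_wedge, det_zero_of_row_eq (i := 0) (j := 2) (by decide) rfl,
      mul_zero]
  have hk0 : k ≠ 0 := fun h => hF0 (by simp [h])
  exact ⟨k, exists_isResonant_of_zeroMode hB hk hk0 hzero hv⟩

end Resonance

theorem blk_eq_reindex (P Q R S : Matrix (Fin 3) (Fin 3) ℝ) :
    blk P Q R S = reindex finSumFinEquiv finSumFinEquiv (fromBlocks P Q R S) := by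
  ext i j
  fin_cases i <;> fin_cases j <;> rfl

theorem append_dotProduct_blk_mulVec_append (P Q R S : Matrix (Fin 3) (Fin 3) ℝ)
    (l m e b : Fin 3 → ℝ) :
    Fin.append l m ⬝ᵥ blk P Q R S *ᵥ Fin.append e b =
      l ⬝ᵥ P *ᵥ e + l ⬝ᵥ Q *ᵥ b + m ⬝ᵥ R *ᵥ e + m ⬝ᵥ S *ᵥ b := by
  have hl (v w : Fin 3 → ℝ) : Fin.append v w = Sum.elim v w ∘ finSumFinEquiv.symm := by
    ext i
    fin_cases i <;> rfl
  rw [blk_eq_reindex, hl, hl, reindex_apply, submatrix_mulVec_equiv,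
    comp_equiv_dotProduct_comp_equiv, Equiv.symm_symm, Function.comp_assoc, Equiv.symm_comp_self,
    Function.comp_id, fromBlocks_mulVec, Sum.elim_comp_inl, Sum.elim_comp_inr,
    sumElim_dotProduct_sumElim, dotProduct_add, dotProduct_add, ← add_assoc]

theorem isUnit_det_A0mat
    (hA0 : IsUnit (of fun μ ν : Fin 3 => ginv G 0 μ.succ 0 ν.succ).det) :
    IsUnit (A0mat G).det := by
  rwa [A0mat, blk_eq_reindex, det_reindex_self, det_fromBlocks_zero₂₁, det_one, mul_one]

/-- The spatial bivector with components `ε_{0νγδ} b_ν` dual to `b`. -/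
def dualBivector (b : Fin 3 → ℝ) : Fin 6 → ℝ :=
  ![0, 0, 0, b 2, b 1, b 0]

theorem dualBivector_cross {y z : Fin 4 → ℝ} (hy : y ∈ spatial) (hz : z ∈ spatial) :
    dualBivector (Fin.tail y ⨯₃ Fin.tail z) = wedge y z := by
  rw [mem_spatial] at hy hz
  ext A
  fin_cases A <;> simp [dualBivector, wedge_apply, pFst, pSnd, hy, hz, cross_apply, Fin.tail]

theorem det_temporal_eq_triple_product (a b c : Fin 4 → ℝ) :
    (of ![f⁰, a, b, c]).det = Fin.tail a ⬝ᵥ Fin.tail b ⨯₃ Fin.tail c := by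
  rw [det_eq_wedge_dotProduct_wedge_rev]
  simp [dotProduct, Fin.sum_univ_succ, wedge_apply, pFst, pSnd, cross_apply, Fin.tail]

theorem eps_zero_succ (μ ν α : Fin 3) :
    eps 0 μ.succ ν.succ α.succ = Pi.single μ 1 ⬝ᵥ Pi.single ν (1 : ℝ) ⨯₃ Pi.single α 1 := by
  have htail (i : Fin 3) : Fin.tail (Pi.single i.succ 1 : Fin 4 → ℝ) = Pi.single i 1 := by
    ext j
    simp [Fin.tail, Pi.single_apply]
  rw [eps_eq_det, det_temporal_eq_triple_product, htail, htail, htail]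

theorem sum_eps_eq_triple_product (m e b : Fin 3 → ℝ) :
    ∑ μ, ∑ ν, ∑ α, m μ * e ν * b α * eps 0 μ.succ ν.succ α.succ = m ⬝ᵥ e ⨯₃ b := by
  simp only [eps_zero_succ, Fin.sum_univ_three, cross_apply, dotProduct, cons_val,
    Pi.single_apply, Fin.reduceEq, ↓reduceIte]
  ring

theorem sum_eps_mul_eq_sum_dualBivector {g : Fin 4 → Fin 4 → ℝ} (hg : ∀ m n, g m n = -g n m)
    (b : Fin 3 → ℝ) :
    ∑ ν : Fin 3, ∑ γ : Fin 3, ∑ δ : Fin 3, b ν * (eps 0 ν.succ γ.succ δ.succ * g γ.succ δ.succ) =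
      2 * ∑ A, dualBivector b A * g (pFst A) (pSnd A) := by
  simp only [eps_zero_succ, Fin.sum_univ_three, Fin.sum_univ_six, cross_apply, dotProduct,
    cons_val, Pi.single_apply, Fin.reduceEq, Fin.reduceSucc, ↓reduceIte, dualBivector, pFst, pSnd]
  rw [hg 2 1, hg 3 2, hg 1 3]
  ring

theorem toBilin'_inv_petrov_wedge_temporal_spatial
    {l e k : Fin 4 → ℝ} (hl : l ∈ spatial) (he : e ∈ spatial) (hk : k ∈ spatial) :
    toBilin' (petrov G)⁻¹ (wedge f⁰ l) (wedge e k) =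
      ∑ μ : Fin 3, ∑ ν : Fin 3, ∑ α : Fin 3,
        l μ.succ * e ν.succ * k α.succ * ginv G 0 μ.succ ν.succ α.succ := by
  rw [mem_spatial] at hl he hk
  rw [← sum_fromPetrov_eq_toBilin'_wedge]
  simp [Fin.sum_univ_succ (n := 3), hl, he, hk, ginv]

theorem toBilin'_inv_petrov_wedge_temporal_temporal
    {l e : Fin 4 → ℝ} (hl : l ∈ spatial) (he : e ∈ spatial) :
    toBilin' (petrov G)⁻¹ (wedge f⁰ l) (wedge f⁰ e) =
      ∑ μ : Fin 3, ∑ ν : Fin 3, l μ.succ * e ν.succ * ginv G 0 μ.succ 0 ν.succ := by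
  rw [mem_spatial] at hl he
  rw [← sum_fromPetrov_eq_toBilin'_wedge]
  simp [Fin.sum_univ_succ (n := 3), hl, he, ginv]

/-- The principal symbol `A¹k₁ + A²k₂ + A³k₃` of the spatial part of the evolution system. -/
def symbol (G : Fin 4 → Fin 4 → Fin 4 → Fin 4 → ℝ) (k : Fin 4 → ℝ) : Matrix (Fin 6) (Fin 6) ℝ :=
  ∑ α : Fin 3, k α.succ • Aalpha G α

theorem append_dotProduct_A0mat_mulVec_append
    {l e : Fin 4 → ℝ} (hl : l ∈ spatial) (he : e ∈ spatial) (m b : Fin 3 → ℝ) :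
    Fin.append (Fin.tail l) m ⬝ᵥ A0mat G *ᵥ Fin.append (Fin.tail e) b =
      toBilin' (petrov G)⁻¹ (wedge f⁰ l) (wedge f⁰ e) + m ⬝ᵥ b := by
  rw [A0mat, append_dotProduct_blk_mulVec_append, zero_mulVec, zero_mulVec, dotProduct_zero,
    dotProduct_zero, add_zero, add_zero, one_mulVec,
    toBilin'_inv_petrov_wedge_temporal_temporal hl he]
  simp only [dotProduct, mulVec, of_apply, Finset.mul_sum, Fin.tail]
  congr! 3 with μ _ ν
  ring

theorem two_mul_toBilin'_dualBivector_wedge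
    {l k : Fin 4 → ℝ} (hl : l ∈ spatial) (hk : k ∈ spatial) (b : Fin 3 → ℝ) :
    2 * toBilin' (petrov G)⁻¹ (dualBivector b) (wedge l k) =
      ∑ ν : Fin 3, ∑ γ : Fin 3, ∑ δ : Fin 3, b ν * (eps 0 ν.succ γ.succ δ.succ *
        ∑ μ : Fin 3, ∑ α : Fin 3, l μ.succ * k α.succ * ginv G γ.succ δ.succ μ.succ α.succ) := by
  rw [mem_spatial] at hl hk
  have hsum (c d : Fin 4) :
      ∑ μ : Fin 3, ∑ α : Fin 3, l μ.succ * k α.succ * ginv G c d μ.succ α.succ =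
        ∑ B, wedge l k B * ginv G c d (pFst B) (pSnd B) := by
    rw [← sum_mul_mul_eq_sum_wedge (f := ginv G c d) (fromPetrov_swap_right _ c d)]
    simp [Fin.sum_univ_succ (n := 3), hl, hk]
  simp only [hsum]
  rw [sum_eps_mul_eq_sum_dualBivector
    (g := fun c d => ∑ B, wedge l k B * ginv G c d (pFst B) (pSnd B)), toBilin'_apply]
  · have hM (A B : Fin 6) : ginv G (pFst A) (pSnd A) (pFst B) (pSnd B) = (petrov G)⁻¹ A B :=
      congrFun₂ (petrov_fromPetrov _) A B
    simp only [hM, Finset.mul_sum]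
    exact Finset.sum_congr rfl fun A _ => Finset.sum_congr rfl fun B _ => by ring
  · intro m n
    rw [← Finset.sum_neg_distrib]
    exact Finset.sum_congr rfl fun B _ => by rw [ginv, fromPetrov_swap_left, mul_neg]

theorem append_dotProduct_symbol_mulVec_append
    {l e k : Fin 4 → ℝ} (hl : l ∈ spatial) (he : e ∈ spatial) (hk : k ∈ spatial)
    (m b : Fin 3 → ℝ) :
    Fin.append (Fin.tail l) m ⬝ᵥ symbol G k *ᵥ Fin.append (Fin.tail e) b =
      -coupling (toBilin' (petrov G)⁻¹) k l e
        - volDensity G * toBilin' (petrov G)⁻¹ (dualBivector b) (wedge l k)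
        + (volDensity G)⁻¹ * m ⬝ᵥ Fin.tail e ⨯₃ Fin.tail k := by
  simp only [symbol, sum_mulVec, dotProduct_sum, smul_mulVec, dotProduct_smul, Aalpha,
    append_dotProduct_blk_mulVec_append, zero_mulVec, dotProduct_zero, add_zero, smul_eq_mul,
    mul_add, Finset.sum_add_distrib]
  congr 1
  · rw [sub_eq_add_neg]
    congr 1
    · rw [coupling_apply, toBilin'_inv_petrov_wedge_temporal_spatial hl he hk,
        toBilin'_inv_petrov_wedge_temporal_spatial he hl hk]
      simp only [dotProduct, mulVec, of_apply, Fin.sum_univ_three, Fin.tail]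
      ring
    · rw [← mul_right_inj' (two_ne_zero (α := ℝ)), mul_neg, mul_left_comm,
        two_mul_toBilin'_dualBivector_wedge hl hk]
      simp only [dotProduct, mulVec, of_apply, vol, ← volDensity.eq_def, Fin.sum_univ_three,
        Fin.tail]
      ring
  · rw [← sum_eps_eq_triple_product]
    simp only [dotProduct, mulVec, of_apply, volInv_eq, Fin.sum_univ_three, Fin.tail]
    ring

theorem exists_append_tail_eq (L : Fin 6 → ℝ) :
    ∃ l ∈ spatial, ∃ m : Fin 3 → ℝ, Fin.append (Fin.tail l) m = L :=
  ⟨Fin.cons 0 fun i => L (Fin.castAdd 3 i), rfl, fun i => L (Fin.natAdd 3 i),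
    Fin.append_castAdd_natAdd (m := 3) (n := 3)⟩

/-- The null vector of the symbol at `k` obtained from a zero mode `x`. -/
def zeroModeVector (G : Fin 4 → Fin 4 → Fin 4 → Fin 4 → ℝ) (k x : Fin 4 → ℝ) : Fin 6 → ℝ :=
  Fin.append (Fin.tail (-(volDensity G * x 0) • k)) (Fin.tail k ⨯₃ Fin.tail x)

theorem dualBivector_zero : dualBivector 0 = 0 := by
  ext A; fin_cases A <;> rfl

theorem tail_smul_add (c : ℝ) (y : Fin 4 → ℝ) : Fin.tail (c • f⁰ + y) = Fin.tail y := by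
  ext i; simp [Fin.tail]

theorem wedge_eq_smul_add_dualBivector_cross {k : Fin 4 → ℝ} (hk : k ∈ spatial) (x : Fin 4 → ℝ) :
    wedge k x = x 0 • wedge k f⁰ + dualBivector (Fin.tail k ⨯₃ Fin.tail x) := by
  obtain ⟨y, hy, hx⟩ := exists_eq_smul_add_spatial x
  have htail : Fin.tail x = Fin.tail y := by rw [hx, tail_smul_add]
  rw [htail, dualBivector_cross hk hy, ← map_smul, ← map_add, ← hx]

theorem zeroModeVector_ne_zero (hinv : IsUnit (petrov G).det) {k x : Fin 4 → ℝ} (hk : k ∈ spatial)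
    (hkx : wedge k x ≠ 0) : zeroModeVector G k x ≠ 0 := by
  intro h
  have he : -(volDensity G * x 0) • Fin.tail k = 0 := funext fun i =>
    (Fin.append_left _ _ i).symm.trans (congrFun h (Fin.castAdd 3 i))
  have hb : Fin.tail k ⨯₃ Fin.tail x = 0 := funext fun i =>
    (Fin.append_right _ _ i).symm.trans (congrFun h (Fin.natAdd 3 i))
  have hk0 : x 0 • k = 0 := by
    rw [neg_smul, neg_eq_zero, mul_smul, smul_eq_zero_iff_right (volDensity_ne_zero hinv)] at he
    exact funext (Fin.cases (by simp [mem_spatial.1 hk]) (congrFun he))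
  refine hkx ?_
  rw [wedge_eq_smul_add_dualBivector_cross hk, ← LinearMap.smul_apply, ← map_smul, hk0, hb,
    dualBivector_zero, map_zero, LinearMap.zero_apply, add_zero]

theorem symbol_mulVec_zeroModeVector {k x : Fin 4 → ℝ} (hk : k ∈ spatial)
    (hx : x ∈ zeroModes (toBilin' (petrov G)⁻¹) k) :
    symbol G k *ᵥ zeroModeVector G k x = 0 := by
  refine dotProduct_eq_zero _ fun L => ?_
  obtain ⟨l, hl, m, rfl⟩ := exists_append_tail_eq L
  have h := mem_zeroModes.1 hx l
  rw [wedge_eq_smul_add_dualBivector_cross hk, map_add, LinearMap.add_apply, map_smul,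
    LinearMap.smul_apply, smul_eq_mul, wedge_swap k l, wedge_swap k f⁰, map_neg, map_neg, map_neg,
    LinearMap.neg_apply, neg_neg] at h
  have hcross : Fin.tail (-(volDensity G * x 0) • k) ⨯₃ Fin.tail k = 0 := by
    change (-(volDensity G * x 0) • Fin.tail k) ⨯₃ Fin.tail k = 0
    rw [map_smul, LinearMap.smul_apply, cross_self, smul_zero]
  rw [dotProduct_comm, zeroModeVector, append_dotProduct_symbol_mulVec_append hl
    (Submodule.smul_mem _ _ hk) hk, hcross, dotProduct_zero, map_smul, coupling_apply,
    wedge_isAlt, map_zero, smul_eq_mul]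
  linear_combination volDensity G * h

theorem coupling_add_of_vecMul_symbol_eq_zero {k l e : Fin 4 → ℝ} (hk : k ∈ spatial)
    (hl : l ∈ spatial) {m : Fin 3 → ℝ} (h : Fin.append (Fin.tail l) m ᵥ* symbol G k = 0)
    (he : e ∈ spatial) (b : Fin 3 → ℝ) :
    coupling (toBilin' (petrov G)⁻¹) k l e +
        volDensity G * toBilin' (petrov G)⁻¹ (dualBivector b) (wedge l k) =
      (volDensity G)⁻¹ * m ⬝ᵥ Fin.tail e ⨯₃ Fin.tail k := by
  have := append_dotProduct_symbol_mulVec_append (G := G) hl he hk m b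
  rw [dotProduct_mulVec, h, zero_dotProduct] at this
  linear_combination this

theorem mem_adjointModes_of_vecMul_symbol_eq_zero (hinv : IsUnit (petrov G).det)
    (hB : (toBilin' (petrov G)⁻¹).IsSymm) {k l : Fin 4 → ℝ} (hk : k ∈ spatial) (hl : l ∈ spatial)
    {m : Fin 3 → ℝ} (h : Fin.append (Fin.tail l) m ᵥ* symbol G k = 0) :
    l ∈ adjointModes (toBilin' (petrov G)⁻¹) k := by
  refine mem_adjointModes.2 ⟨hl, fun y hy z hz => ?_, ?_⟩
  · have := coupling_add_of_vecMul_symbol_eq_zero hk hl h (zero_mem _) (Fin.tail y ⨯₃ Fin.tail z)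
    rw [dualBivector_cross hy hz, map_zero, zero_add, show Fin.tail (0 : Fin 4 → ℝ) = 0 from rfl,
      map_zero, LinearMap.zero_apply, dotProduct_zero, mul_zero] at this
    rw [hB.eq]
    exact (mul_eq_zero.1 this).resolve_left (volDensity_ne_zero hinv)
  · have := coupling_add_of_vecMul_symbol_eq_zero hk hl h hk 0
    rwa [dualBivector_zero, map_zero, LinearMap.zero_apply, mul_zero, add_zero, cross_self,
      dotProduct_zero, mul_zero, coupling_apply, wedge_isAlt, map_zero, zero_add, hB.eq] at this

/-- The temporal part of `x` contributes the first block of `A⁰`; the left null condition, tested on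
the spatial part of `x`, turns the second block into the rest of the coupling. -/
theorem append_dotProduct_A0mat_mulVec_zeroModeVector (hinv : IsUnit (petrov G).det)
    {k l : Fin 4 → ℝ} (x : Fin 4 → ℝ) (hk : k ∈ spatial) (hl : l ∈ spatial) {m : Fin 3 → ℝ}
    (h : Fin.append (Fin.tail l) m ᵥ* symbol G k = 0) :
    Fin.append (Fin.tail l) m ⬝ᵥ A0mat G *ᵥ zeroModeVector G k x =
      -(volDensity G * coupling (toBilin' (petrov G)⁻¹) k x l) := by
  obtain ⟨y, hy, hx⟩ := exists_eq_smul_add_spatial x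
  have hw := volDensity_ne_zero hinv
  have hspat : volDensity G * coupling (toBilin' (petrov G)⁻¹) k l y =
      -(m ⬝ᵥ Fin.tail k ⨯₃ Fin.tail x) := by
    have := coupling_add_of_vecMul_symbol_eq_zero hk hl h hy 0
    rw [dualBivector_zero, map_zero, LinearMap.zero_apply, mul_zero, add_zero, ← cross_anticomm,
      dotProduct_neg] at this
    rw [this, mul_inv_cancel_left₀ hw, hx, tail_smul_add]
  have htemp : coupling (toBilin' (petrov G)⁻¹) k l f⁰ =
      toBilin' (petrov G)⁻¹ (wedge f⁰ l) (wedge f⁰ k) := by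
    rw [coupling_apply, wedge_isAlt, map_zero, LinearMap.zero_apply, add_zero]
  have hsum : coupling (toBilin' (petrov G)⁻¹) k x l =
      x 0 * coupling (toBilin' (petrov G)⁻¹) k l f⁰ + coupling (toBilin' (petrov G)⁻¹) k l y := by
    rw [coupling_comm, ← smul_eq_mul, ← map_smul, ← map_add, ← hx]
  rw [zeroModeVector, append_dotProduct_A0mat_mulVec_append hl (Submodule.smul_mem _ _ hk),
    map_smul, map_smul, smul_eq_mul, hsum, htemp]
  linear_combination hspat

theorem IsResonant.exists_jordan_chain (hinv : IsUnit (petrov G).det)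
    (hB : (toBilin' (petrov G)⁻¹).IsSymm) (hA0 : IsUnit (A0mat G).det) {k x : Fin 4 → ℝ}
    (h : IsResonant (toBilin' (petrov G)⁻¹) k x) :
    ∃ u v, u ≠ 0 ∧ Cmat G k *ᵥ u = 0 ∧ Cmat G k *ᵥ v = u := by
  have hC (w : Fin 6 → ℝ) : Cmat G k *ᵥ w = -((A0mat G)⁻¹ *ᵥ symbol G k *ᵥ w) := by
    rw [mulVec_mulVec, ← neg_mulVec]
    rfl
  obtain ⟨z, hz⟩ : ∃ z, symbol G k *ᵥ z = A0mat G *ᵥ zeroModeVector G k x := by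
    refine exists_mulVec_eq_of_forall_vecMul_eq_zero fun L hL => ?_
    obtain ⟨l, hl, m, rfl⟩ := exists_append_tail_eq L
    rw [append_dotProduct_A0mat_mulVec_zeroModeVector hinv x h.mem_spatial hl hL,
      h.coupling_eq_zero l
        (mem_adjointModes_of_vecMul_symbol_eq_zero hinv hB h.mem_spatial hl hL),
      mul_zero, neg_zero]
  refine ⟨zeroModeVector G k x, -z, zeroModeVector_ne_zero hinv h.mem_spatial h.wedge_ne_zero,
    ?_, ?_⟩
  · rw [hC, symbol_mulVec_zeroModeVector h.mem_spatial h.mem_zeroModes, mulVec_zero, neg_zero]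
  · rw [hC, mulVec_neg, mulVec_neg, neg_neg, hz, mulVec_mulVec, nonsing_inv_mul _ hA0, one_mulVec]

theorem evolution_symbol_not_diagonalizable_of_jordan_chain_general
    (hsym : ∀ a b c d, G a b c d = G c d a b)
    (hasym : ∀ a b c d, G a b c d = -G b a c d)
    (hinv : IsUnit (petrov G).det)
    {lam : ℝ} {Ω : Fin 6 → ℝ} (hΩ0 : Ω ≠ 0) (hΩ : Kmat G *ᵥ Ω = lam • Ω)
    (hΩΩ : toBilin' (petrov eps) Ω Ω = 0)
    {t : Matrix (Fin 4) (Fin 4) ℝ} (ht : IsUnit t.det)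
    (hA0 : IsUnit (Matrix.of fun μ ν : Fin 3 => ginv (transform t G) 0 μ.succ 0 ν.succ).det) :
    ∃ k : Fin 4 → ℝ, k 0 = 0 ∧ k ≠ 0 ∧
      Module.finrank ℂ
          (LinearMap.ker (Matrix.toLin' ((Cmat (transform t G) k).map (algebraMap ℝ ℂ))))
        < ((Cmat (transform t G) k).map (algebraMap ℝ ℂ)).charpoly.rootMultiplicity 0 := by
  have hasym' (a b c d : Fin 4) : G a b c d = -G a b d c := by
    rw [hsym, hasym, hsym]
  have hdet := isUnit_det_petrov_transform hasym hasym' hinv ht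
  have hB := isSymm_toBilin'_inv_petrov_transform hasym hasym' hsym t
  have hF := petrov_transform_inv_mulVec hasym hasym' ht (inv_petrov_mulVec_of_Kmat_mulVec hinv hΩ)
  have hFF : toBilin' (petrov eps) ((compound t)ᵀ *ᵥ Ω) ((compound t)ᵀ *ᵥ Ω) = 0 := by
    rw [toBilin'_petrov_eps_compound_transpose_mulVec, hΩΩ, mul_zero]
  obtain ⟨k, x, hkx⟩ := exists_isResonant_of_isotropic_eigenvector hB
    (compound_transpose_mulVec_ne_zero ht hΩ0) hFF fun X => by
      rw [toBilin'_apply', hF, dotProduct_smul, smul_eq_mul, toBilin'_apply']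
  obtain ⟨u, v, hu0, hu, hv⟩ := hkx.exists_jordan_chain hdet hB (isUnit_det_A0mat hA0)
  exact ⟨k, hkx.mem_spatial, fun h => hkx.wedge_ne_zero (by simp [h]),
    finrank_ker_lt_rootMultiplicity_charpoly_map hu0 hu hv⟩

end

/-- Lemma 4.2: failure of diagonalizability of the evolution symbol.
If `K = ω̂_G ∘ Ĝ⁻¹` admits a real Jordan chain of length two, then in any basis
`(f₀,f₁,f₂,f₃)` of `ℝ⁴` (given by the columns of an invertible matrix `t`, all components
below taken in this basis) in which `𝒢(f⁰,f⁰,f⁰,f⁰) ≠ 0` and the matrix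
`((G⁻¹)^{0μ0ν})_{μ,ν}` is invertible, there is a nonzero covector `k` in the span of
`f¹,f²,f³` such that `C(k) = -(A⁰)⁻¹(A¹k₁ + A²k₂ + A³k₃)` is not diagonalizable over `ℂ`:
the algebraic multiplicity of its eigenvalue `0` strictly exceeds the geometric one. -/
theorem evolution_symbol_not_diagonalizable_of_jordan_chain
    (G : Fin 4 → Fin 4 → Fin 4 → Fin 4 → ℝ)
    (hsym : ∀ a b c d, G a b c d = G c d a b)
    (hasym : ∀ a b c d, G a b c d = - G b a c d)
    (hinv : IsUnit (petrov G).det)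
    (lam : ℝ) (Ω₁ Ω₂ : Fin 6 → ℝ) (hΩ₁ : Ω₁ ≠ 0)
    (h1 : (Kmat G).mulVec Ω₁ = lam • Ω₁)
    (h2 : (Kmat G).mulVec Ω₂ = Ω₁ + lam • Ω₂)
    (t : Matrix (Fin 4) (Fin 4) ℝ) (ht : IsUnit t.det)
    (hfres : fresnelPoly (transform t G) (fun i => if i = 0 then 1 else 0) ≠ 0)
    (hA0 : IsUnit (Matrix.of fun μ ν : Fin 3 => ginv (transform t G) 0 μ.succ 0 ν.succ).det) :
    ∃ k : Fin 4 → ℝ, k 0 = 0 ∧ k ≠ 0 ∧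
      Module.finrank ℂ
          (LinearMap.ker (Matrix.toLin' ((Cmat (transform t G) k).map (algebraMap ℝ ℂ))))
        < ((Cmat (transform t G) k).map (algebraMap ℝ ℂ)).charpoly.rootMultiplicity 0 := by
  have hΩ := bilin_self_eq_zero_of_jordan_chain (isSelfAdjoint_Kmat hsym) h1 h2
  exact evolution_symbol_not_diagonalizable_of_jordan_chain_general hsym hasym hinv hΩ₁ h1 hΩ ht hA0

end
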